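/- Let f be the Lomelí map with parameters a = 44/100, b = 21/100, c = 35/100, α = −1/4, τ = −3/10. Then f has two distinct fixed points p_1 ≠ p_2, each of the form (x,x,x) with x² + τx + α = 0, such that: the complex Jacobian matrix Df(p_1) has an eigenvalue λ_1 with Re λ_1 ∈ [−0.71570025199987, −0.71570025199985] and Im λ_1 ∈ [−0.93025058966104, −0.93025058966103], and Df(p_2) has an eigenvalue λ_2 with Re λ_2 ∈ [−0.47875667823481, −0.47875667823480] and Im λ_2 ∈ [−0.70015090953401, −0.70015090953400]. In particular |λ_1| > 1 and |λ_2| < 1, so p_1 has a complex conjugate pair of unstable eigenvalues and p_2 a complex conjugate pair of stable eigenvalues. -/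

import Mathlib

open Matrix

/-- The Jacobian matrix of `f : ℝ³ → ℝ³` at a point. -/
noncomputable def jacobian (f : (Fin 3 → ℝ) → (Fin 3 → ℝ)) (z : Fin 3 → ℝ) :
    Matrix (Fin 3) (Fin 3) ℝ :=
  Matrix.of fun i j => fderiv ℝ f z (Pi.single j 1) i

/-!
At a diagonal point `(x, x, x)` the Jacobian is the companion matrix of `λ³ = A λ² + B λ + 1` with
`A = τ + (2a + b) x` and `B = (b + 2c) x`. If `r` is a nonzero real root, the other two have sum
`A - r` and product `1 / r`; when they are not real they are conjugate, with real part `(A - r) / 2`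
and squared modulus `1 / r`. A short interval containing `r`, certified by a sign change of the
cubic, therefore encloses the complex pair, and this pair is unstable when `r < 1` and stable when
`r > 1`.
-/

section RealCubic

variable {A B D r : ℝ} {z : ℂ}

theorem exists_cubic_root_mem_Icc {lo hi : ℝ} (hle : lo ≤ hi)
    (hlo : lo ^ 3 ≤ A * lo ^ 2 + B * lo + D) (hhi : A * hi ^ 2 + B * hi + D ≤ hi ^ 3) :
    ∃ r ∈ Set.Icc lo hi, r ^ 3 = A * r ^ 2 + B * r + D :=
  isPreconnected_Icc.intermediate_value₂ (Set.left_mem_Icc.2 hle) (Set.right_mem_Icc.2 hle)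
    (by fun_prop) (by fun_prop) hlo hhi

theorem cubic_root_of_re_of_normSq (hr0 : r ≠ 0) (hr : r ^ 3 = A * r ^ 2 + B * r + D)
    (hre : z.re = (A - r) / 2) (hnorm : Complex.normSq z = D / r) :
    z ^ 3 = A * z ^ 2 + B * z + D := by
  have sum_pair : z + starRingEnd ℂ z = A - r := by
    rw [Complex.add_conj, hre]
    push_cast
    ring
  have prod_pair : z * starRingEnd ℂ z = ↑(D / r) := by rw [Complex.mul_conj, hnorm]
  have quadratic : z ^ 2 - (A - r) * z + ↑(D / r) = 0 := by
    linear_combination z * sum_pair - prod_pair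
  have linear_coeff : (B : ℂ) = r ^ 2 - A * r - ↑(D / r) := by
    have : B = r ^ 2 - A * r - D / r := by
      field_simp
      linear_combination -hr
    exact_mod_cast this
  have constant_coeff : (r : ℂ) * ↑(D / r) = D := by exact_mod_cast mul_div_cancel₀ D hr0
  linear_combination (z - r) * quadratic - z * linear_coeff + constant_coeff

theorem exists_re_eq_im_nonpos_normSq_eq {s N : ℝ} (h : s ^ 2 ≤ N) :
    ∃ z : ℂ, z.re = s ∧ z.im ≤ 0 ∧ Complex.normSq z = N := by
  refine ⟨⟨s, -√(N - s ^ 2)⟩, rfl, neg_nonpos.2 (Real.sqrt_nonneg _), ?_⟩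
  rw [Complex.normSq_mk, neg_mul_neg, Real.mul_self_sqrt (sub_nonneg.2 h)]
  ring

theorem im_mem_Icc_of_re_mem_Icc {slo shi tlo thi : ℝ} (him : z.im ≤ 0)
    (hre : z.re ∈ Set.Icc slo shi) (hshi : shi ≤ 0) (hthi : 0 ≤ thi)
    (hlo : slo ^ 2 + tlo ^ 2 ≤ Complex.normSq z) (hhi : Complex.normSq z ≤ shi ^ 2 + thi ^ 2) :
    z.im ∈ Set.Icc (-thi) (-tlo) := by
  have re_sq_le : z.re ^ 2 ≤ slo ^ 2 :=
    sq_le_sq.2 (abs_le_abs_of_nonpos (hre.2.trans hshi) hre.1)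
  have le_re_sq : shi ^ 2 ≤ z.re ^ 2 := sq_le_sq.2 (abs_le_abs_of_nonpos hshi hre.2)
  rw [Complex.normSq_apply] at hlo hhi
  have im_sq_le : z.im ^ 2 ≤ thi ^ 2 := by linarith
  have le_im_sq : tlo ^ 2 ≤ z.im ^ 2 := by linarith
  have tlo_le : tlo ≤ -z.im := calc
    tlo ≤ |tlo| := le_abs_self tlo
    _ ≤ |z.im| := sq_le_sq.1 le_im_sq
    _ = -z.im := abs_of_nonpos him
  exact ⟨(abs_le.1 (abs_le_of_sq_le_sq im_sq_le hthi)).1, le_neg_of_le_neg tlo_le⟩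

theorem exists_complex_cubic_root_enclosure {rlo rhi slo shi tlo thi : ℝ} (hrlo : 0 < rlo)
    (hle : rlo ≤ rhi) (hlo : rlo ^ 3 ≤ A * rlo ^ 2 + B * rlo + D)
    (hhi : A * rhi ^ 2 + B * rhi + D ≤ rhi ^ 3)
    (hslo : slo ≤ (A - rhi) / 2) (hshi : (A - rlo) / 2 ≤ shi) (hshi0 : shi ≤ 0) (hthi : 0 ≤ thi)
    (hNlo : slo ^ 2 + tlo ^ 2 ≤ D / rhi) (hNhi : D / rlo ≤ shi ^ 2 + thi ^ 2) :
    ∃ z : ℂ, z ^ 3 = A * z ^ 2 + B * z + D ∧ z.re ∈ Set.Icc slo shi ∧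
      z.im ∈ Set.Icc (-thi) (-tlo) ∧ Complex.normSq z ∈ Set.Icc (D / rhi) (D / rlo) := by
  obtain ⟨r, ⟨hr_lo, hr_hi⟩, hr⟩ := exists_cubic_root_mem_Icc hle hlo hhi
  have hr_pos : 0 < r := hrlo.trans_le hr_lo
  have hD : 0 ≤ D := by
    have : 0 ≤ D / rhi := le_trans (by positivity) hNlo
    rwa [le_div_iff₀ (hrlo.trans_le hle), zero_mul] at this
  have hN : D / r ∈ Set.Icc (D / rhi) (D / rlo) :=
    ⟨div_le_div_of_nonneg_left hD hr_pos hr_hi, div_le_div_of_nonneg_left hD hrlo hr_lo⟩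
  have hs : (A - r) / 2 ∈ Set.Icc slo shi := ⟨by linarith, by linarith⟩
  have hsN : ((A - r) / 2) ^ 2 ≤ D / r := calc
    ((A - r) / 2) ^ 2 ≤ slo ^ 2 := sq_le_sq.2 (abs_le_abs_of_nonpos (hs.2.trans hshi0) hs.1)
    _ ≤ slo ^ 2 + tlo ^ 2 := le_add_of_nonneg_right (sq_nonneg tlo)
    _ ≤ D / r := hNlo.trans hN.1
  obtain ⟨z, hre, him, hnorm⟩ := exists_re_eq_im_nonpos_normSq_eq hsN
  rw [← hre] at hs
  rw [← hnorm] at hN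
  exact ⟨z, cubic_root_of_re_of_normSq hr_pos.ne' hr hre hnorm, hs,
    im_mem_Icc_of_re_mem_Icc him hs hshi0 hthi (hNlo.trans hN.1) (hN.2.trans hNhi), hN⟩

end RealCubic

section RecurrenceMatrix

variable {R S : Type*} [CommRing R] [CommRing S]

/-- The companion matrix of the recurrence `u (n + 3) = A u (n + 2) + B u (n + 1) + D u n`, acting
on the states `(u (n + 2), u (n + 1), u n)`. The Jacobian of a Lomelí map has this shape. -/
def recurrenceMatrix (A B D : R) : Matrix (Fin 3) (Fin 3) R :=
  !![A, B, D; 1, 0, 0; 0, 1, 0]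

theorem recurrenceMatrix_map (g : R →+* S) (A B D : R) :
    (recurrenceMatrix A B D).map g = recurrenceMatrix (g A) (g B) (g D) := by
  ext i j
  fin_cases i <;> fin_cases j <;> simp [recurrenceMatrix]

theorem isRoot_charpoly_recurrenceMatrix_iff {A B D x : R} :
    (recurrenceMatrix A B D).charpoly.IsRoot x ↔ x ^ 3 = A * x ^ 2 + B * x + D := by
  have eval_eq : (recurrenceMatrix A B D).charpoly.eval x =
      x ^ 3 - (A * x ^ 2 + B * x + D) := by
    rw [Matrix.eval_charpoly, Matrix.det_fin_three]
    simp only [recurrenceMatrix, scalar_apply, Matrix.sub_apply, diagonal_apply, of_apply,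
      cons_val', cons_val_zero, cons_val_one, cons_val, cons_val_fin_one, Fin.reduceEq,
      if_true, if_false]
    ring
  rw [Polynomial.IsRoot, eval_eq, sub_eq_zero]

end RecurrenceMatrix

theorem isRoot_charpoly_map_ofReal_conj {n : Type*} [Fintype n] [DecidableEq n]
    {M : Matrix n n ℝ} {z : ℂ} (hz : (M.map Complex.ofReal).charpoly.IsRoot z) :
    (M.map Complex.ofReal).charpoly.IsRoot (starRingEnd ℂ z) := by
  have charpoly_eq : (M.map Complex.ofReal).charpoly = M.charpoly.map (algebraMap ℝ ℂ) :=
    M.charpoly_map (algebraMap ℝ ℂ)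
  rw [charpoly_eq, Polynomial.IsRoot, Polynomial.eval_map_algebraMap] at hz ⊢
  rw [Polynomial.aeval_conj, hz, map_zero]

theorem jacobian_eq_of_hasFDerivAt {f : (Fin 3 → ℝ) → (Fin 3 → ℝ)} {v : Fin 3 → ℝ}
    {M : Matrix (Fin 3) (Fin 3) ℝ}
    (h : HasFDerivAt f (LinearMap.toContinuousLinearMap M.mulVecLin) v) : jacobian f v = M := by
  ext i j
  simp [jacobian, h.fderiv]

section LomeliMap

/-- The Lomelí map `(x, y, z) ↦ (z + α + τ x + a x² + b x y + c y², x, y)`. -/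
def lomeliMap (a b c α τ : ℝ) (v : Fin 3 → ℝ) : Fin 3 → ℝ :=
  ![v 2 + α + τ * v 0 + a * v 0 ^ 2 + b * v 0 * v 1 + c * v 1 ^ 2, v 0, v 1]

variable (a b c α τ : ℝ)

theorem isFixedPt_lomeliMap_diagonal_iff {x : ℝ} :
    Function.IsFixedPt (lomeliMap a b c α τ) ![x, x, x] ↔
      (a + b + c) * x ^ 2 + τ * x + α = 0 := by
  have first_coord : x + α + τ * x + a * x ^ 2 + b * x * x + c * x ^ 2 = x ↔
      (a + b + c) * x ^ 2 + τ * x + α = 0 := by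
    constructor <;> intro h <;> linear_combination h
  simpa [Function.IsFixedPt, lomeliMap] using first_coord

theorem hasFDerivAt_lomeliMap (v : Fin 3 → ℝ) :
    HasFDerivAt (lomeliMap a b c α τ)
      (LinearMap.toContinuousLinearMap (recurrenceMatrix
        (τ + 2 * a * v 0 + b * v 1) (b * v 0 + 2 * c * v 1) 1).mulVecLin) v := by
  have hcoord (i : Fin 3) : HasFDerivAt (fun w : Fin 3 → ℝ => w i)
      (ContinuousLinearMap.proj (R := ℝ) (φ := fun _ => ℝ) i) v :=
    hasFDerivAt_apply i v
  have hfirst := (((((hcoord 2).add_const α).add ((hcoord 0).const_mul τ)).add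
    (((hcoord 0).pow 2).const_mul a)).add (((hcoord 0).const_mul b).mul (hcoord 1))).add
    (((hcoord 1).pow 2).const_mul c)
  refine hasFDerivAt_pi'' fun i => ?_
  fin_cases i
  · refine hfirst.congr_fderiv (ContinuousLinearMap.ext fun w => ?_)
    simp only [recurrenceMatrix, Fin.zero_eta, _root_.add_apply, _root_.smul_apply,
      ContinuousLinearMap.proj_apply, ContinuousLinearMap.comp_apply,
      LinearMap.coe_toContinuousLinearMap', mulVecBilin_apply, cons_mulVec, dotProduct,
      Fin.sum_univ_three, cons_val_zero, cons_val_one, cons_val, nsmul_eq_mul, smul_eq_mul,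
      Nat.cast_ofNat]
    ring
  · refine (hcoord 0).congr_fderiv (ContinuousLinearMap.ext fun w => ?_)
    simp [recurrenceMatrix, dotProduct, Fin.sum_univ_three]
  · refine (hcoord 1).congr_fderiv (ContinuousLinearMap.ext fun w => ?_)
    simp [recurrenceMatrix, dotProduct, Fin.sum_univ_three]

theorem jacobian_lomeliMap (v : Fin 3 → ℝ) :
    jacobian (lomeliMap a b c α τ) v =
      recurrenceMatrix (τ + 2 * a * v 0 + b * v 1) (b * v 0 + 2 * c * v 1) 1 :=
  jacobian_eq_of_hasFDerivAt (hasFDerivAt_lomeliMap a b c α τ v)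

theorem jacobian_lomeliMap_diagonal (x : ℝ) :
    jacobian (lomeliMap a b c α τ) ![x, x, x] =
      recurrenceMatrix (τ + (2 * a + b) * x) ((b + 2 * c) * x) 1 := calc
  _ = recurrenceMatrix (τ + 2 * a * x + b * x) (b * x + 2 * c * x) 1 := jacobian_lomeliMap ..
  _ = recurrenceMatrix (τ + (2 * a + b) * x) ((b + 2 * c) * x) 1 := by congr 1 <;> ring

theorem isRoot_charpoly_jacobian_lomeliMap_diagonal_iff {x : ℝ} {z : ℂ} :
    ((jacobian (lomeliMap a b c α τ) ![x, x, x]).map Complex.ofReal).charpoly.IsRoot z ↔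
      z ^ 3 = ↑(τ + (2 * a + b) * x) * z ^ 2 + ↑((b + 2 * c) * x) * z + ↑(1 : ℝ) := by
  have map_eq (A B D : ℝ) :
      (recurrenceMatrix A B D).map Complex.ofReal = recurrenceMatrix (A : ℂ) B D :=
    recurrenceMatrix_map Complex.ofRealHom A B D
  rw [jacobian_lomeliMap_diagonal, map_eq, isRoot_charpoly_recurrenceMatrix_iff]

end LomeliMap

theorem sqrt_109_mem_Icc : √109 ∈ Set.Icc (10.44030650891055017 : ℝ) 10.44030650891055018 :=
  ⟨Real.le_sqrt_of_sq_le (by norm_num), Real.sqrt_le_iff.2 (by norm_num)⟩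

theorem exists_unstable_eigenvalue_lomeliMap {x : ℝ}
    (hx : x ∈ Set.Icc (-0.37201532544552751 : ℝ) (-0.37201532544552750)) :
    ∃ z : ℂ, ((jacobian (lomeliMap (44 / 100) (21 / 100) (35 / 100) (-1 / 4) (-3 / 10))
        ![x, x, x]).map Complex.ofReal).charpoly.IsRoot z ∧
      z.re ∈ Set.Icc (-0.71570025199987 : ℝ) (-0.71570025199985) ∧
      z.im ∈ Set.Icc (-0.93025058966104 : ℝ) (-0.93025058966103) ∧ 1 < ‖z‖ := by
  obtain ⟨hxlo, hxhi⟩ := hx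
  -- The imaginary part comes from `1 / r - s ^ 2`, which loses digits, so `r` and the real part `s`
  -- are enclosed more sharply than the final bounds.
  obtain ⟨z, hroot, hre, him, hnorm, -⟩ := exists_complex_cubic_root_enclosure
    (A := -3 / 10 + (2 * (44 / 100) + 21 / 100) * x) (B := (21 / 100 + 2 * (35 / 100)) * x)
    (D := 1) (rlo := 0.7259037992640942) (rhi := 0.7259037992640943)
    (slo := -0.7157002519998597) (shi := -0.7157002519998595)
    (tlo := 0.93025058966103) (thi := 0.93025058966104)
    (by norm_num) (by norm_num) (by linarith) (by linarith) (by linarith) (by linarith)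
    (by norm_num) (by norm_num) (by norm_num) (by norm_num)
  refine ⟨z, (isRoot_charpoly_jacobian_lomeliMap_diagonal_iff ..).2 hroot,
    Set.Icc_subset_Icc (by norm_num) (by norm_num) hre, him, ?_⟩
  rw [← one_lt_sq_iff₀ (norm_nonneg z), Complex.sq_norm]
  exact lt_of_lt_of_le (by norm_num) hnorm

theorem exists_stable_eigenvalue_lomeliMap {x : ℝ}
    (hx : x ∈ Set.Icc (0.67201532544552750 : ℝ) 0.67201532544552751) :
    ∃ z : ℂ, ((jacobian (lomeliMap (44 / 100) (21 / 100) (35 / 100) (-1 / 4) (-3 / 10))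
        ![x, x, x]).map Complex.ofReal).charpoly.IsRoot z ∧
      z.re ∈ Set.Icc (-0.47875667823481 : ℝ) (-0.47875667823480) ∧
      z.im ∈ Set.Icc (-0.70015090953401 : ℝ) (-0.70015090953400) ∧ ‖z‖ < 1 := by
  obtain ⟨hxlo, hxhi⟩ := hx
  obtain ⟨z, hroot, hre, him, -, hnorm⟩ := exists_complex_cubic_root_enclosure
    (A := -3 / 10 + (2 * (44 / 100) + 21 / 100) * x) (B := (21 / 100 + 2 * (35 / 100)) * x)
    (D := 1) (rlo := 1.3900100612052325) (rhi := 1.3900100612052326)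
    (slo := -0.4787566782348039) (shi := -0.4787566782348037)
    (tlo := 0.70015090953400) (thi := 0.70015090953401)
    (by norm_num) (by norm_num) (by linarith) (by linarith) (by linarith) (by linarith)
    (by norm_num) (by norm_num) (by norm_num) (by norm_num)
  refine ⟨z, (isRoot_charpoly_jacobian_lomeliMap_diagonal_iff ..).2 hroot,
    Set.Icc_subset_Icc (by norm_num) (by norm_num) hre, him, ?_⟩
  rw [← sq_lt_one_iff₀ (norm_nonneg z), Complex.sq_norm]
  exact lt_of_le_of_lt hnorm (by norm_num)

/-- Rigorous eigenvalue enclosures for the Lomelí map with parameters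
`a = 44/100, b = 21/100, c = 35/100, α = −1/4, τ = −3/10` (Section 4.3.2 of the paper).
There are two distinct diagonal fixed points `p₁ ≠ p₂`; `Df(p₁)` has a complex eigenvalue
`λ₁` (together with its conjugate) with the stated real/imaginary part enclosures and
`|λ₁| > 1`, and `Df(p₂)` has a complex eigenvalue `λ₂` (together with its conjugate) with
the stated enclosures and `|λ₂| < 1`. -/
theorem lomeli_eigenvalue_enclosures
    (f : (Fin 3 → ℝ) → (Fin 3 → ℝ))
    (hf : ∀ v, f v =
      ![v 2 + (-1 / 4 : ℝ) + (-3 / 10 : ℝ) * v 0 + (44 / 100 : ℝ) * (v 0) ^ 2 +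
          (21 / 100 : ℝ) * v 0 * v 1 + (35 / 100 : ℝ) * (v 1) ^ 2, v 0, v 1]) :
    ∃ p1 p2 : Fin 3 → ℝ, p1 ≠ p2 ∧ f p1 = p1 ∧ f p2 = p2 ∧
      (∃ x : ℝ, p1 = ![x, x, x] ∧ x ^ 2 + (-3 / 10 : ℝ) * x + (-1 / 4 : ℝ) = 0) ∧
      (∃ x : ℝ, p2 = ![x, x, x] ∧ x ^ 2 + (-3 / 10 : ℝ) * x + (-1 / 4 : ℝ) = 0) ∧
      (∃ lam1 : ℂ,
        ((jacobian f p1).map Complex.ofReal).charpoly.IsRoot lam1 ∧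
        ((jacobian f p1).map Complex.ofReal).charpoly.IsRoot (starRingEnd ℂ lam1) ∧
        lam1.re ∈ Set.Icc (-0.71570025199987 : ℝ) (-0.71570025199985 : ℝ) ∧
        lam1.im ∈ Set.Icc (-0.93025058966104 : ℝ) (-0.93025058966103 : ℝ) ∧
        1 < ‖lam1‖) ∧
      (∃ lam2 : ℂ,
        ((jacobian f p2).map Complex.ofReal).charpoly.IsRoot lam2 ∧
        ((jacobian f p2).map Complex.ofReal).charpoly.IsRoot (starRingEnd ℂ lam2) ∧
        lam2.re ∈ Set.Icc (-0.47875667823481 : ℝ) (-0.47875667823480 : ℝ) ∧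
        lam2.im ∈ Set.Icc (-0.70015090953401 : ℝ) (-0.70015090953400 : ℝ) ∧
        ‖lam2‖ < 1) := by
  obtain rfl : f = lomeliMap (44 / 100) (21 / 100) (35 / 100) (-1 / 4) (-3 / 10) := funext hf
  obtain ⟨hlo, hhi⟩ := sqrt_109_mem_Icc
  have hsq : √(109 : ℝ) ^ 2 = 109 := Real.sq_sqrt (by norm_num)
  set x₁ := (3 - √(109 : ℝ)) / 20 with hx₁
  set x₂ := (3 + √(109 : ℝ)) / 20 with hx₂
  have root₁ : x₁ ^ 2 + (-3 / 10) * x₁ + (-1 / 4) = 0 := by linear_combination hsq / 400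
  have root₂ : x₂ ^ 2 + (-3 / 10) * x₂ + (-1 / 4) = 0 := by linear_combination hsq / 400
  have hne : ![x₁, x₁, x₁] ≠ ![x₂, x₂, x₂] := fun h => by
    have : x₁ = x₂ := congrFun h 0
    linarith
  obtain ⟨z₁, hz₁, hz₁_enclosure⟩ :=
    exists_unstable_eigenvalue_lomeliMap (x := x₁) ⟨by linarith, by linarith⟩
  obtain ⟨z₂, hz₂, hz₂_enclosure⟩ :=
    exists_stable_eigenvalue_lomeliMap (x := x₂) ⟨by linarith, by linarith⟩
  exact ⟨![x₁, x₁, x₁], ![x₂, x₂, x₂], hne,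
    (isFixedPt_lomeliMap_diagonal_iff ..).2 (by linear_combination root₁),
    (isFixedPt_lomeliMap_diagonal_iff ..).2 (by linear_combination root₂),
    ⟨x₁, rfl, root₁⟩, ⟨x₂, rfl, root₂⟩,
    ⟨z₁, hz₁, isRoot_charpoly_map_ofReal_conj hz₁, hz₁_enclosure⟩,
    ⟨z₂, hz₂, isRoot_charpoly_map_ofReal_conj hz₂, hz₂_enclosure⟩⟩
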